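/- Symplectic eigenvalues of the Bob–receiver covariance matrix: Let η ∈ [0,1] and N_a, N_b ≥ 0 be real numbers, and write η̄ = 1 − η. Let V^{BC} be the real 4×4 matrix with rows (2(ηN_a+η̄N_b)+1, 0, 2√η̄·√(N_b(N_b+1)), 0), (0, 2(ηN_a+η̄N_b)+1, 0, −2√η̄·√(N_b(N_b+1))), (2√η̄·√(N_b(N_b+1)), 0, 2N_b+1, 0), (0, −2√η̄·√(N_b(N_b+1)), 0, 2N_b+1), and let J be the block-diagonal 4×4 matrix with two diagonal blocks equal to [[0,1],[−1,0]]. Then the characteristic polynomial of J·V^{BC} equals (X² + (λ_{BC}^+)²)·(X² + (λ_{BC}^−)²), where λ_{BC}^± = η|N_a − N_b| ± √(η²(N_a − N_b)² + 2η(2N_aN_b + N_a + N_b) + 1); equivalently, the eigenvalues of i·J·V^{BC} are λ_{BC}^+, −λ_{BC}^+, λ_{BC}^−, −λ_{BC}^−. -/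

import Mathlib

open Matrix Polynomial

/-- The characteristic polynomial of `J * V` for a two-mode covariance matrix `V` in standard form
with local blocks `a • 1`, `b • 1` and correlation block `diag(s, -s)`. -/
theorem charpoly_symplecticForm_mul_standardForm {R : Type*} [CommRing R] (a b s : R) :
    ((!![0, 1, 0, 0; -1, 0, 0, 0; 0, 0, 0, 1; 0, 0, -1, 0] : Matrix (Fin 4) (Fin 4) R) *
      !![a, 0, s, 0; 0, a, 0, -s; s, 0, b, 0; 0, -s, 0, b]).charpoly =
      X ^ 4 + C ((a - b) ^ 2 + 2 * (a * b - s ^ 2)) * X ^ 2 + C ((a * b - s ^ 2) ^ 2) := by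
  have hmul : (!![0, 1, 0, 0; -1, 0, 0, 0; 0, 0, 0, 1; 0, 0, -1, 0] : Matrix (Fin 4) (Fin 4) R) *
      !![a, 0, s, 0; 0, a, 0, -s; s, 0, b, 0; 0, -s, 0, b] =
      !![0, a, 0, -s; -a, 0, -s, 0; 0, -s, 0, b; -s, 0, -b, 0] := by
    ext i j
    fin_cases i <;> fin_cases j <;> simp [Matrix.mul_apply, Fin.sum_univ_four]
  have hchar : charmatrix (!![0, a, 0, -s; -a, 0, -s, 0; 0, -s, 0, b; -s, 0, -b, 0]) =
      !![X, -C a, 0, C s; C a, X, C s, 0; 0, C s, X, -C b; C s, 0, C b, X] := by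
    ext1 i j
    fin_cases i <;> fin_cases j <;> simp
  have htwo : (C 2 : R[X]) = 2 := map_ofNat C 2
  rw [hmul, Matrix.charpoly, hchar, det_succ_row_zero]
  simp [Fin.sum_univ_four, det_fin_three, Fin.succAbove, submatrix_apply, htwo]
  ring

/-- Symplectic eigenvalues of the Bob–receiver covariance matrix:
for `η ∈ [0,1]`, `η̄ = 1 − η`, and `N_a, N_b ≥ 0`, the characteristic polynomial of
`J·V^{BC}` equals `(X² + (λ_{BC}^+)²)(X² + (λ_{BC}^−)²)`, where
`λ_{BC}^± = η|N_a−N_b| ± √(η²(N_a−N_b)² + 2η(2N_aN_b+N_a+N_b) + 1)`. -/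
theorem symplectic_eigenvalues_BC (η Na Nb : ℝ)
    (hη : 0 ≤ η) (hη' : η ≤ 1) (hNa : 0 ≤ Na) (hNb : 0 ≤ Nb) :
    let ηb : ℝ := 1 - η
    let s : ℝ := 2 * Real.sqrt ηb * Real.sqrt (Nb * (Nb + 1))
    let VBC : Matrix (Fin 4) (Fin 4) ℝ :=
      !![2 * (η * Na + ηb * Nb) + 1, 0, s, 0;
         0, 2 * (η * Na + ηb * Nb) + 1, 0, -s;
         s, 0, 2 * Nb + 1, 0;
         0, -s, 0, 2 * Nb + 1]
    let J : Matrix (Fin 4) (Fin 4) ℝ :=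
      !![0, 1, 0, 0;
         -1, 0, 0, 0;
         0, 0, 0, 1;
         0, 0, -1, 0]
    let lp : ℝ := η * |Na - Nb| +
      Real.sqrt (η ^ 2 * (Na - Nb) ^ 2 + 2 * η * (2 * Na * Nb + Na + Nb) + 1)
    let lm : ℝ := η * |Na - Nb| -
      Real.sqrt (η ^ 2 * (Na - Nb) ^ 2 + 2 * η * (2 * Na * Nb + Na + Nb) + 1)
    (J * VBC).charpoly = (X ^ 2 + C (lp ^ 2)) * (X ^ 2 + C (lm ^ 2)) := by
  intro ηb s VBC J lp lm
  have hs : s ^ 2 = 4 * (1 - η) * (Nb * (Nb + 1)) := by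
    simp only [s, ηb, mul_pow]
    rw [Real.sq_sqrt (by linarith), Real.sq_sqrt (by positivity)]
    ring
  set r := Real.sqrt (η ^ 2 * (Na - Nb) ^ 2 + 2 * η * (2 * Na * Nb + Na + Nb) + 1)
  have hr2 : r ^ 2 = η ^ 2 * (Na - Nb) ^ 2 + 2 * η * (2 * Na * Nb + Na + Nb) + 1 :=
    Real.sq_sqrt (by positivity)
  have habs : |Na - Nb| ^ 2 = (Na - Nb) ^ 2 := sq_abs _
  have hdet : (2 * (η * Na + ηb * Nb) + 1) * (2 * Nb + 1) - s ^ 2 = -(lp * lm) := by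
    simp only [lp, lm, ηb]
    linear_combination -hs - hr2 + η ^ 2 * habs
  have hsum : (2 * (η * Na + ηb * Nb) + 1 - (2 * Nb + 1)) ^ 2 + 2 * -(lp * lm) =
      lp ^ 2 + lm ^ 2 := by
    simp only [lp, lm, ηb]
    linear_combination -4 * η ^ 2 * habs
  rw [charpoly_symplecticForm_mul_standardForm, hdet, hsum]
  simp only [map_add, map_mul, map_neg, map_pow]
  ring
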